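/- A pair (b, i) of nonnegative integers equals (b(T), i(T)) for some lattice triangle T if and only if there exist integers A, B, C with A > 0 and 0 ≤ B < C such that b = A + gcd(B, C) + gcd(B − A, C) and i = (A·C − b)/2 + 1. -/

import Mathlib

open MeasureTheory

/-- The point of `ℝ²` corresponding to an integer point. -/
def toR2 (z : ℤ × ℤ) : ℝ × ℝ := ((z.1 : ℝ), (z.2 : ℝ))

/-- A lattice polygon: a two-dimensional convex hull of finitely many integer points. -/
def IsLatticePolygon (P : Set (ℝ × ℝ)) : Prop :=
  ∃ S : Finset (ℤ × ℤ), P = convexHull ℝ (toR2 '' (S : Set (ℤ × ℤ))) ∧ affineSpan ℝ P = ⊤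

/-- A lattice triangle: the convex hull of three affinely independent integer points. -/
def IsLatticeTriangle (T : Set (ℝ × ℝ)) : Prop :=
  ∃ v0 v1 v2 : ℤ × ℤ, AffineIndependent ℝ ![toR2 v0, toR2 v1, toR2 v2] ∧
    T = convexHull ℝ {toR2 v0, toR2 v1, toR2 v2}

/-- The number of lattice points on the boundary. -/
noncomputable def bcount (P : Set (ℝ × ℝ)) : ℕ :=
  Set.ncard {z : ℤ × ℤ | toR2 z ∈ frontier P}

/-- The number of lattice points in the interior. -/
noncomputable def icount (P : Set (ℝ × ℝ)) : ℕ :=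
  Set.ncard {z : ℤ × ℤ | toR2 z ∈ interior P}

/-- The Euclidean area. -/
noncomputable def area (P : Set (ℝ × ℝ)) : ℝ := (volume P).toReal

/-!
Let `D` be twice the area of a lattice triangle `pqr`. The half-open parallelogram spanned by its
edges at `p` contains exactly `D` lattice points. Adding the vertices `q` and `r` gives the disjoint
union of the open triangle, its image under the point reflection `z ↦ q + r - z`, and the boundary
of the triangle, so `2 i + b = D + 2`. Walking round the boundary by half-open edges shows that `b`
is the sum of the gcds of the edge vectors. Finally, bringing two edge vectors into Hermite normal
form by a unimodular map reduces to the vertices `(0, 0)`, `(A, 0)`, `(B, C)`, for which `D = A * C`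
and the edge gcds are `A`, `gcd (B, C)` and `gcd (B - A, C)`.
-/

/-! ### Signed area -/

section SignedArea

variable {R : Type*} [CommRing R]

/-- The cross product (determinant) of two plane vectors. -/
def cross (u w : R × R) : R := u.1 * w.2 - u.2 * w.1

/-- Twice the signed area of the triangle `p q r`. As a function of `r` it is the affine equation
of the line `p q`, positive to the left of it, and so serves as a barycentric coordinate. -/
def orient (p q r : R × R) : R := cross (q - p) (r - p)

/-- Maps of the plane preserving signed areas. The orientation-preserving affine automorphisms
of `ℤ × ℤ` are of this kind. -/
def PreservesOrient (f : R × R → R × R) : Prop :=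
  ∀ p q r, orient (f p) (f q) (f r) = orient p q r

lemma orient_eq (p q r : R × R) :
    orient p q r = (q.1 - p.1) * (r.2 - p.2) - (q.2 - p.2) * (r.1 - p.1) := rfl

lemma orient_swap (p q r : R × R) : orient p r q = -orient p q r := by
  simp only [orient_eq]; ring

lemma orient_rotate (p q r : R × R) : orient q r p = orient p q r := by
  simp only [orient_eq]; ring

lemma orient_add_orient_add_orient (p q r z : R × R) :
    orient p q z + orient q r z + orient r p z = orient p q r := by
  simp only [orient_eq]; ring

lemma orient_self_left (p q : R × R) : orient p q p = 0 := by
  simp only [orient_eq]; ring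

lemma orient_self_right (p q : R × R) : orient p q q = 0 := by
  simp only [orient_eq]; ring

/-- Cramer's rule. -/
lemma orient_smul_sub (p q r z : R × R) :
    orient p q r • (z - p) = orient r p z • (q - p) + orient p q z • (r - p) := by
  ext <;> simp only [orient_eq, Prod.smul_fst, Prod.smul_snd, Prod.fst_sub, Prod.snd_sub,
    Prod.fst_add, Prod.snd_add, smul_eq_mul] <;> ring

lemma eq_of_orient_eq [IsDomain R] {p q r z w : R × R} (h : orient p q r ≠ 0)
    (hpq : orient p q z = orient p q w) (hrp : orient r p z = orient r p w) : z = w := by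
  have hsmul : orient p q r • (z - p) = orient p q r • (w - p) := by
    rw [orient_smul_sub p q r z, orient_smul_sub p q r w, hpq, hrp]
  exact sub_left_injective (smul_right_injective _ h hsmul)

end SignedArea

/-! ### Barycentric coordinates -/

section Barycentric

variable {K : Type*} [Field K] {p q r : K × K}

lemma linearIndependent_pair_iff_cross_ne_zero (u w : K × K) :
    LinearIndependent K ![u, w] ↔ cross u w ≠ 0 := by
  have hrow : (!![u.1, u.2; w.1, w.2] : Matrix (Fin 2) (Fin 2) K).row =
      (LinearEquiv.finTwoArrow K K).symm ∘ ![u, w] := by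
    funext i j
    fin_cases i <;> fin_cases j <;> rfl
  rw [← LinearMap.linearIndependent_iff (LinearEquiv.finTwoArrow K K).symm.toLinearMap
    (LinearEquiv.ker _), LinearEquiv.coe_coe, ← hrow, Matrix.linearIndependent_rows_iff_isUnit,
    Matrix.isUnit_iff_isUnit_det, Matrix.det_fin_two_of, isUnit_iff_ne_zero, cross]

lemma affineIndependent_iff_orient_ne_zero (p q r : K × K) :
    AffineIndependent K ![p, q, r] ↔ orient p q r ≠ 0 := by
  have hedges : (fun i : {i : Fin 3 // i ≠ 0} => ![p, q, r] i -ᵥ ![p, q, r] 0) ∘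
      finSuccAboveEquiv 0 = ![q - p, r - p] := by
    funext i
    fin_cases i <;> rfl
  rw [affineIndependent_iff_linearIndependent_vsub K _ 0,
    ← linearIndependent_equiv (finSuccAboveEquiv 0), hedges,
    linearIndependent_pair_iff_cross_ne_zero, orient]

/-- The affine basis of the plane formed by the vertices of a nondegenerate triangle. -/
noncomputable def triangleBasis (h : orient p q r ≠ 0) :
    AffineBasis (Fin 3) K (K × K) where
  toFun := ![p, q, r]
  ind' := (affineIndependent_iff_orient_ne_zero p q r).2 h
  tot' := by
    have hind := (affineIndependent_iff_orient_ne_zero p q r).2 h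
    rw [hind.affineSpan_eq_top_iff_card_eq_finrank_add_one]
    simp

lemma triangleBasis_coord_mul (h : orient p q r ≠ 0)
    (x : K × K) (i : Fin 3) :
    (triangleBasis h).coord i x * orient p q r =
      ![orient q r x, orient r p x, orient p q x] i := by
  have hsum := (triangleBasis h).sum_coord_apply_eq_one x
  have hcomb := (triangleBasis h).linear_combination_coord_eq_self x
  have hvert : ⇑(triangleBasis h) = ![p, q, r] := rfl
  simp only [Fin.sum_univ_three, hvert] at hsum hcomb
  generalize (triangleBasis h).coord = c at hsum hcomb ⊢
  have h0 : c 0 x = 1 - c 1 x - c 2 x := by linear_combination hsum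
  simp only [h0, Matrix.cons_val] at hcomb
  obtain ⟨hx, hy⟩ := Prod.ext_iff.1 hcomb
  simp only [Prod.fst_add, Prod.snd_add, Prod.smul_fst, Prod.smul_snd, smul_eq_mul] at hx hy
  fin_cases i <;> simp only [orient_eq, ← hx, ← hy, h0, Fin.zero_eta, Fin.mk_one, Fin.reduceFinMk,
    Matrix.cons_val] <;> ring

lemma range_triangleBasis (h : orient p q r ≠ 0) :
    Set.range (triangleBasis h) = {p, q, r} := by
  have hvert : ⇑(triangleBasis h) = ![p, q, r] := rfl
  rw [hvert, Matrix.range_cons, Matrix.range_cons, Matrix.range_cons, Matrix.range_empty,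
    Set.union_empty, Set.singleton_union, Set.singleton_union]

lemma convexHull_eq_orient_nonneg [LinearOrder K] [IsStrictOrderedRing K]
    (h : 0 < orient p q r) :
    convexHull K {p, q, r} = {x | 0 ≤ orient p q x ∧ 0 ≤ orient q r x ∧ 0 ≤ orient r p x} := by
  rw [← range_triangleBasis h.ne', AffineBasis.convexHull_eq_nonneg_coord]
  ext x
  have hcoord i := mul_nonneg_iff_of_pos_right (b := (triangleBasis h.ne').coord i x) h
  simp only [triangleBasis_coord_mul] at hcoord
  simp only [Set.mem_ofPred_eq, ← hcoord, Fin.forall_fin_succ, IsEmpty.forall_iff,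
    Matrix.cons_val_zero, Matrix.cons_val_succ, and_true]
  tauto

lemma interior_convexHull_eq_orient_pos {p q r : ℝ × ℝ} (h : 0 < orient p q r) :
    interior (convexHull ℝ {p, q, r}) =
      {x | 0 < orient p q x ∧ 0 < orient q r x ∧ 0 < orient r p x} := by
  rw [← range_triangleBasis h.ne', AffineBasis.interior_convexHull]
  ext x
  have hcoord i := mul_pos_iff_of_pos_right (a := (triangleBasis h.ne').coord i x) h
  simp only [triangleBasis_coord_mul] at hcoord
  simp only [Set.mem_ofPred_eq, ← hcoord, Fin.forall_fin_succ, IsEmpty.forall_iff,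
    Matrix.cons_val_zero, Matrix.cons_val_succ, and_true]
  tauto

end Barycentric

/-! ### Lattice points of a triangle -/

/-- The convex hull of three lattice points. -/
def latticeTriangle (p q r : ℤ × ℤ) : Set (ℝ × ℝ) := convexHull ℝ {toR2 p, toR2 q, toR2 r}

lemma orient_toR2 (p q r : ℤ × ℤ) : orient (toR2 p) (toR2 q) (toR2 r) = (orient p q r : ℤ) := by
  simp [orient_eq, toR2]

lemma toR2_mem_interior_latticeTriangle {p q r : ℤ × ℤ} (h : 0 < orient p q r) (z : ℤ × ℤ) :
    toR2 z ∈ interior (latticeTriangle p q r) ↔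
      0 < orient p q z ∧ 0 < orient q r z ∧ 0 < orient r p z := by
  have hR : 0 < orient (toR2 p) (toR2 q) (toR2 r) := by rw [orient_toR2]; exact_mod_cast h
  simp only [latticeTriangle, interior_convexHull_eq_orient_pos hR, Set.mem_ofPred_eq, orient_toR2,
    Int.cast_pos]

lemma toR2_mem_frontier_latticeTriangle {p q r : ℤ × ℤ} (h : 0 < orient p q r) (z : ℤ × ℤ) :
    toR2 z ∈ frontier (latticeTriangle p q r) ↔
      (0 ≤ orient p q z ∧ 0 ≤ orient q r z ∧ 0 ≤ orient r p z) ∧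
        (orient p q z = 0 ∨ orient q r z = 0 ∨ orient r p z = 0) := by
  have hR : 0 < orient (toR2 p) (toR2 q) (toR2 r) := by rw [orient_toR2]; exact_mod_cast h
  have hclosed : IsClosed (latticeTriangle p q r) :=
    Set.Finite.isClosed_convexHull ℝ (Set.toFinite _)
  rw [hclosed.frontier_eq, Set.mem_sdiff, toR2_mem_interior_latticeTriangle h]
  simp only [latticeTriangle, convexHull_eq_orient_nonneg hR, Set.mem_ofPred_eq, orient_toR2,
    Int.cast_nonneg_iff]
  omega

lemma IsLatticeTriangle.exists_orient_pos {T : Set (ℝ × ℝ)} (hT : IsLatticeTriangle T) :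
    ∃ p q r : ℤ × ℤ, 0 < orient p q r ∧ T = latticeTriangle p q r := by
  obtain ⟨p, q, r, hind, rfl⟩ := hT
  rw [affineIndependent_iff_orient_ne_zero, orient_toR2, Int.cast_ne_zero] at hind
  rcases hind.lt_or_gt with hneg | hpos
  · refine ⟨p, r, q, by rw [orient_swap]; omega, ?_⟩
    rw [latticeTriangle, Set.pair_comm]
  · exact ⟨p, q, r, hpos, rfl⟩

lemma isLatticeTriangle_latticeTriangle {p q r : ℤ × ℤ} (h : orient p q r ≠ 0) :
    IsLatticeTriangle (latticeTriangle p q r) := by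
  refine ⟨p, q, r, ?_, rfl⟩
  rw [affineIndependent_iff_orient_ne_zero, orient_toR2]
  exact_mod_cast h

lemma ncard_preimage_equiv {α β : Type*} (e : α ≃ β) (s : Set β) : (e ⁻¹' s).ncard = s.ncard :=
  congrArg ENat.toNat (Set.encard_preimage_of_bijective e.bijective s)

lemma bcount_latticeTriangle_apply {e : ℤ × ℤ ≃ ℤ × ℤ} (he : PreservesOrient e) {p q r : ℤ × ℤ}
    (h : 0 < orient p q r) :
    bcount (latticeTriangle (e p) (e q) (e r)) = bcount (latticeTriangle p q r) := by
  have h' : 0 < orient (e p) (e q) (e r) := by rwa [he]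
  have hpre : {z | toR2 z ∈ frontier (latticeTriangle p q r)} =
      e ⁻¹' {z | toR2 z ∈ frontier (latticeTriangle (e p) (e q) (e r))} := by
    ext z
    simp only [Set.mem_preimage, Set.mem_ofPred_eq, toR2_mem_frontier_latticeTriangle h,
      toR2_mem_frontier_latticeTriangle h', he _ _ _]
  rw [bcount, bcount, hpre, ncard_preimage_equiv]

/-! ### Hermite normal form -/

section HermiteNormalForm

variable {R : Type*} [CommRing R]

/-- The linear automorphism of the plane with matrix `!![a, b; c, d]` of determinant one. -/
def unimodularEquiv (a b c d : R) (h : a * d - b * c = 1) :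
    (R × R) ≃ₗ[R] R × R where
  toFun z := (a * z.1 + b * z.2, c * z.1 + d * z.2)
  invFun z := (d * z.1 - b * z.2, a * z.2 - c * z.1)
  map_add' z w := by ext <;> simp only [Prod.fst_add, Prod.snd_add] <;> ring
  map_smul' t z := by
    ext <;> simp only [Prod.smul_fst, Prod.smul_snd, smul_eq_mul, RingHom.id_apply] <;> ring
  left_inv z := by
    ext
    · linear_combination z.1 * h
    · linear_combination z.2 * h
  right_inv z := by
    ext
    · linear_combination z.1 * h
    · linear_combination z.2 * h

lemma unimodularEquiv_apply (a b c d : R) (h : a * d - b * c = 1)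
    (z : R × R) : unimodularEquiv a b c d h z = (a * z.1 + b * z.2, c * z.1 + d * z.2) := rfl

lemma cross_unimodularEquiv (a b c d : R) (h : a * d - b * c = 1)
    (u w : R × R) :
    cross (unimodularEquiv a b c d h u) (unimodularEquiv a b c d h w) = cross u w := by
  simp only [cross, unimodularEquiv_apply]
  linear_combination (u.1 * w.2 - u.2 * w.1) * h

lemma exists_eq_smul_of_cross_eq_zero {u v : R × R} {a b : R} (hu : a * u.1 + b * u.2 = 1)
    (h : cross u v = 0) : ∃ k : R, v = k • u := by
  rw [cross] at h
  refine ⟨a * v.1 + b * v.2, Prod.ext ?_ ?_⟩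
  · rw [Prod.smul_fst, smul_eq_mul]
    linear_combination -v.1 * hu - b * h
  · rw [Prod.smul_snd, smul_eq_mul]
    linear_combination -v.2 * hu + a * h

lemma gcd_pos_of_cross_ne_zero {u w : ℤ × ℤ} (h : cross u w ≠ 0) : 0 < Int.gcd u.1 u.2 := by
  refine Nat.pos_of_ne_zero fun h0 => h ?_
  rw [Int.gcd_eq_zero_iff] at h0
  simp [cross, h0]

lemma exists_bezout_primitive {u : ℤ × ℤ} (hu : 0 < Int.gcd u.1 u.2) :
    ∃ m n a b : ℤ, a * m + b * n = 1 ∧ u = (Int.gcd u.1 u.2 : ℤ) • (m, n) := by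
  obtain ⟨m, n, hmn, hm, hn⟩ := Int.exists_gcd_one hu
  obtain ⟨a, b, hab⟩ := Int.isCoprime_iff_gcd_eq_one.2 hmn
  exact ⟨m, n, a, b, hab, Prod.ext (hm.trans (mul_comm _ _)) (hn.trans (mul_comm _ _))⟩

lemma exists_linearEquiv_apply_eq_gcd {u : ℤ × ℤ} (hu : 0 < Int.gcd u.1 u.2) :
    ∃ f : (ℤ × ℤ) ≃ₗ[ℤ] ℤ × ℤ, (∀ v w, cross (f v) (f w) = cross v w) ∧
      f u = ((Int.gcd u.1 u.2 : ℤ), 0) := by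
  obtain ⟨m, n, a, b, hab, hmn⟩ := exists_bezout_primitive hu
  have hdet : a * m - b * -n = 1 := by linear_combination hab
  refine ⟨unimodularEquiv a b (-n) m hdet, cross_unimodularEquiv _ _ _ _ hdet, ?_⟩
  have hprim : unimodularEquiv a b (-n) m hdet (m, n) = (1, 0) :=
    Prod.ext hab (by simp only [unimodularEquiv_apply]; ring)
  conv_lhs => rw [hmn]
  rw [map_smul, hprim]
  simp

lemma exists_linearEquiv_hermite {u w : ℤ × ℤ} (h : 0 < cross u w) :
    ∃ f : (ℤ × ℤ) ≃ₗ[ℤ] ℤ × ℤ, (∀ v v', cross (f v) (f v') = cross v v') ∧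
      ∃ A B C : ℤ, 0 < A ∧ 0 ≤ B ∧ B < C ∧ f u = (A, 0) ∧ f w = (B, C) := by
  have hu : 0 < Int.gcd u.1 u.2 := gcd_pos_of_cross_ne_zero h.ne'
  obtain ⟨f, hf, hfu⟩ := exists_linearEquiv_apply_eq_gcd hu
  obtain ⟨⟨B, C⟩, hfw⟩ : ∃ v, f w = v := ⟨_, rfl⟩
  have hA : (0 : ℤ) < Int.gcd u.1 u.2 := by exact_mod_cast hu
  have hC : 0 < C := by
    rw [← hf, hfu, hfw] at h
    simpa [cross, hu] using h
  have hshear : (1 : ℤ) * 1 - -(B / C) * 0 = 1 := by ring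
  refine ⟨f.trans (unimodularEquiv _ _ _ _ hshear), fun v v' => ?_, Int.gcd u.1 u.2, B % C, C, hA,
    Int.emod_nonneg _ hC.ne', Int.emod_lt_of_pos _ hC, ?_, ?_⟩
  · rw [LinearEquiv.trans_apply, LinearEquiv.trans_apply, cross_unimodularEquiv, hf]
  · rw [LinearEquiv.trans_apply, hfu, unimodularEquiv_apply]
    simp
  · rw [LinearEquiv.trans_apply, hfw, unimodularEquiv_apply, Int.emod_def]
    ext <;> ring

lemma exists_preservesOrient_hermite {p q r : ℤ × ℤ} (h : 0 < orient p q r) :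
    ∃ e : ℤ × ℤ ≃ ℤ × ℤ, PreservesOrient e ∧
      ∃ A B C : ℤ, 0 < A ∧ 0 ≤ B ∧ B < C ∧ e p = (0, 0) ∧ e q = (A, 0) ∧ e r = (B, C) := by
  obtain ⟨f, hf, A, B, C, hA, hB, hBC, hq, hr⟩ := exists_linearEquiv_hermite h
  refine ⟨(Equiv.subRight p).trans f.toEquiv, fun x y z => ?_, A, B, C, hA, hB, hBC, ?_, hq, hr⟩
  · simp [orient, ← map_sub, hf]
  · simp [Prod.mk_zero_zero]

lemma orient_hermite (A B C : ℤ) : orient (0, 0) (A, 0) (B, C) = A * C := by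
  simp [orient_eq]

end HermiteNormalForm

/-! ### Pick's formula -/

/-- The lattice points of the half-open parallelogram `p + [0, 1) (q - p) + [0, 1) (r - p)`,
described by its barycentric inequalities. -/
def latticeParallelogram (p q r : ℤ × ℤ) : Set (ℤ × ℤ) :=
  {z | orient p q z ∈ Set.Ico 0 (orient p q r) ∧ orient r p z ∈ Set.Ico 0 (orient p q r)}

lemma ncard_latticeParallelogram_hermite {A C : ℤ} (B : ℤ) (hA : 0 < A) (hC : 0 < C) :
    ((latticeParallelogram (0, 0) (A, 0) (B, C)).ncard : ℤ) = A * C := by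
  -- The row at height `y` consists of the `A` integers `x` with `0 ≤ C * x - B * y < A * C`.
  let shift : ℤ × ℤ ≃ ℤ × ℤ :=
    ((Equiv.prodComm ℤ ℤ).trans
      (Equiv.prodShear (Equiv.refl ℤ) fun y => Equiv.addRight (-(B * y) / C))).trans
      (Equiv.prodComm ℤ ℤ)
  have hshift : latticeParallelogram (0, 0) (A, 0) (B, C) =
      shift ⁻¹' (Set.Ico 0 A ×ˢ Set.Ico 0 C) := by
    ext ⟨x, y⟩
    have hdiv := Int.mul_ediv_add_emod (-(B * y)) C
    have hmod := Int.emod_nonneg (-(B * y)) hC.ne'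
    have hmod' := Int.emod_lt_of_pos (-(B * y)) hC
    have hbase : orient (0, 0) (A, 0) (x, y) = A * y := orient_hermite A x y
    have hside : orient (B, C) (0, 0) (x, y) =
        C * (x + -(B * y) / C) + -(B * y) % C := by
      simp only [orient_eq]; linear_combination -hdiv
    have hmem : (x, y) ∈ shift ⁻¹' (Set.Ico 0 A ×ˢ Set.Ico 0 C) ↔
        (0 ≤ x + -(B * y) / C ∧ x + -(B * y) / C < A) ∧ 0 ≤ y ∧ y < C := Iff.rfl
    rw [hmem]
    simp only [latticeParallelogram, Set.mem_ofPred_eq, Set.mem_Ico, hbase, hside, orient_hermite]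
    generalize x + -(B * y) / C = k
    generalize -(B * y) % C = m at *
    rw [mul_nonneg_iff_of_pos_left hA, mul_lt_mul_iff_right₀ hA]
    have hnonneg : 0 ≤ C * k + m ↔ 0 ≤ k := ⟨fun h => by nlinarith, fun h => by positivity⟩
    have hlt : C * k + m < A * C ↔ k < A := ⟨fun h => by nlinarith, fun h => by nlinarith⟩
    rw [hnonneg, hlt, and_comm]
  rw [hshift, ncard_preimage_equiv, Set.ncard_prod, ← Finset.coe_Ico, ← Finset.coe_Ico,
    Set.ncard_coe_finset, Set.ncard_coe_finset, Int.card_Ico, Int.card_Ico]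
  push_cast
  rw [sub_zero, sub_zero, Int.toNat_of_nonneg hA.le, Int.toNat_of_nonneg hC.le]

lemma ncard_latticeParallelogram {p q r : ℤ × ℤ} (h : 0 < orient p q r) :
    ((latticeParallelogram p q r).ncard : ℤ) = orient p q r := by
  obtain ⟨e, he, A, B, C, hA, hB, hBC, hp, hq, hr⟩ := exists_preservesOrient_hermite h
  have hpre : latticeParallelogram p q r = e ⁻¹' latticeParallelogram (e p) (e q) (e r) := by
    ext z
    simp only [latticeParallelogram, Set.mem_preimage, Set.mem_ofPred_eq, he _ _ _]
  rw [hpre, ncard_preimage_equiv, ← he, hp, hq, hr,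
    ncard_latticeParallelogram_hermite B hA (hB.trans_lt hBC)]
  exact (orient_hermite A B C).symm

lemma toR2_reflection_mem_interior_latticeTriangle {p q r : ℤ × ℤ} (h : 0 < orient p q r)
    (z : ℤ × ℤ) :
    toR2 (q + r - z) ∈ interior (latticeTriangle p q r) ↔
      orient p q z < orient p q r ∧ orient q r z < 0 ∧ orient r p z < orient p q r := by
  have hpq : orient p q (q + r - z) = orient p q r - orient p q z := by
    simp only [orient_eq, Prod.fst_sub, Prod.snd_sub, Prod.fst_add, Prod.snd_add]; ring
  have hqr : orient q r (q + r - z) = -orient q r z := by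
    simp only [orient_eq, Prod.fst_sub, Prod.snd_sub, Prod.fst_add, Prod.snd_add]; ring
  have hrp : orient r p (q + r - z) = orient p q r - orient r p z := by
    simp only [orient_eq, Prod.fst_sub, Prod.snd_sub, Prod.fst_add, Prod.snd_add]; ring
  rw [toR2_mem_interior_latticeTriangle h, hpq, hqr, hrp, sub_pos, neg_pos, sub_pos]

lemma interior_union_reflection_union_frontier {p q r : ℤ × ℤ} (h : 0 < orient p q r) :
    {z | toR2 z ∈ interior (latticeTriangle p q r)} ∪
        {z | toR2 (q + r - z) ∈ interior (latticeTriangle p q r)} ∪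
        {z | toR2 z ∈ frontier (latticeTriangle p q r)} =
      insert q (insert r (latticeParallelogram p q r)) := by
  ext z
  have hsum := orient_add_orient_add_orient p q r z
  have hq : z = q ↔ orient p q z = 0 ∧ orient r p z = orient p q r := by
    have hrpq := orient_rotate r p q
    rw [← orient_self_right p q, hrpq]
    exact ⟨by rintro rfl; exact ⟨rfl, rfl⟩, fun hz => eq_of_orient_eq h.ne' hz.1 hz.2⟩
  have hr : z = r ↔ orient p q z = orient p q r ∧ orient r p z = 0 := by
    rw [← orient_self_left r p]
    exact ⟨by rintro rfl; exact ⟨rfl, rfl⟩, fun hz => eq_of_orient_eq h.ne' hz.1 hz.2⟩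
  simp only [Set.mem_union, Set.mem_insert_iff, Set.mem_ofPred_eq, latticeParallelogram,
    Set.mem_Ico, toR2_mem_interior_latticeTriangle h, toR2_mem_frontier_latticeTriangle h,
    ↓toR2_reflection_mem_interior_latticeTriangle h, hq, hr]
  omega

lemma disjoint_interior_reflection {p q r : ℤ × ℤ} (h : 0 < orient p q r) :
    Disjoint {z | toR2 z ∈ interior (latticeTriangle p q r)}
      {z | toR2 (q + r - z) ∈ interior (latticeTriangle p q r)} := by
  rw [Set.disjoint_left]
  intro z
  simp only [Set.mem_ofPred_eq, toR2_mem_interior_latticeTriangle h,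
    ↓toR2_reflection_mem_interior_latticeTriangle h]
  omega

lemma disjoint_interior_union_reflection_frontier {p q r : ℤ × ℤ} (h : 0 < orient p q r) :
    Disjoint ({z | toR2 z ∈ interior (latticeTriangle p q r)} ∪
        {z | toR2 (q + r - z) ∈ interior (latticeTriangle p q r)})
      {z | toR2 z ∈ frontier (latticeTriangle p q r)} := by
  rw [Set.disjoint_left]
  intro z
  simp only [Set.mem_union, Set.mem_ofPred_eq, toR2_mem_interior_latticeTriangle h,
    ↓toR2_reflection_mem_interior_latticeTriangle h, toR2_mem_frontier_latticeTriangle h]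
  omega

lemma ncard_insert_insert_latticeParallelogram {p q r : ℤ × ℤ} (h : 0 < orient p q r) :
    ((insert q (insert r (latticeParallelogram p q r))).ncard : ℤ) = orient p q r + 2 := by
  have hcard := ncard_latticeParallelogram h
  have hfin : (latticeParallelogram p q r).Finite := Set.finite_of_ncard_pos (by omega)
  have hr : r ∉ latticeParallelogram p q r := fun hmem => hmem.1.2.false
  have hq : q ∉ insert r (latticeParallelogram p q r) := by
    rintro (rfl | hmem)
    · exact h.ne' (orient_self_right p q)
    · exact hmem.2.2.ne (orient_rotate r p q).symm
  rw [Set.ncard_insert_of_notMem hq (hfin.insert r), Set.ncard_insert_of_notMem hr hfin]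
  push_cast
  omega

theorem two_mul_icount_add_bcount {p q r : ℤ × ℤ} (h : 0 < orient p q r) :
    2 * (icount (latticeTriangle p q r) : ℤ) + bcount (latticeTriangle p q r) =
      orient p q r + 2 := by
  have hcard := ncard_insert_insert_latticeParallelogram h
  have hfin : (insert q (insert r (latticeParallelogram p q r))).Finite :=
    Set.finite_of_ncard_pos (by omega)
  have hdisj := disjoint_interior_reflection h
  have hdisjF := disjoint_interior_union_reflection_frontier h
  rw [← interior_union_reflection_union_frontier h] at hcard hfin
  have hreflect : {z | toR2 (q + r - z) ∈ interior (latticeTriangle p q r)}.ncard =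
      icount (latticeTriangle p q r) :=
    ncard_preimage_equiv (Equiv.subLeft (q + r)) {z | toR2 z ∈ interior (latticeTriangle p q r)}
  rw [Set.finite_union, Set.finite_union] at hfin
  obtain ⟨⟨hfinI, hfinI'⟩, hfinF⟩ := hfin
  rw [Set.ncard_union_eq hdisjF (hfinI.union hfinI') hfinF,
    Set.ncard_union_eq hdisj hfinI hfinI', hreflect, ← icount, ← bcount] at hcard
  push_cast at hcard
  omega

/-! ### Boundary points -/

lemma mem_halfOpenEdge_iff {p r u : ℤ × ℤ} {a b g : ℤ} (hu : a * u.1 + b * u.2 = 1) (hg : 0 < g)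
    (h : 0 < cross u (r - p)) (z : ℤ × ℤ) :
    orient p (p + g • u) z = 0 ∧ 0 < orient (p + g • u) r z ∧ 0 ≤ orient r p z ↔
      ∃ k ∈ Set.Ico 0 g, p + k • u = z := by
  have hpq (x : ℤ × ℤ) : orient p (p + g • u) x = g * cross u (x - p) := by
    simp only [orient, cross, add_sub_cancel_left, Prod.smul_fst, Prod.smul_snd, smul_eq_mul]
    ring
  have hcross (k : ℤ) : cross u (p + k • u - p) = 0 := by
    simp only [cross, add_sub_cancel_left, Prod.smul_fst, Prod.smul_snd, smul_eq_mul]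
    ring
  have hrp (k : ℤ) : orient r p (p + k • u) = k * cross u (r - p) := by
    simp only [orient_eq, cross, Prod.fst_add, Prod.snd_add, Prod.fst_sub, Prod.snd_sub,
      Prod.smul_fst, Prod.smul_snd, smul_eq_mul]
    ring
  have hqr (k : ℤ) : orient (p + g • u) r (p + k • u) = (g - k) * cross u (r - p) := by
    linear_combination orient_add_orient_add_orient p (p + g • u) r (p + k • u) - hrp k -
      hpq (p + k • u) - g * hcross k + hpq r
  constructor
  · rintro ⟨hline, hbeforeEnd, hafterStart⟩
    rw [hpq, mul_eq_zero_iff_left hg.ne'] at hline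
    obtain ⟨k, hk⟩ := exists_eq_smul_of_cross_eq_zero hu hline
    obtain rfl : p + k • u = z := by rw [← hk, add_sub_cancel]
    rw [hqr, mul_pos_iff_of_pos_right h, sub_pos] at hbeforeEnd
    rw [hrp, mul_nonneg_iff_of_pos_right h] at hafterStart
    exact ⟨k, ⟨hafterStart, hbeforeEnd⟩, rfl⟩
  · rintro ⟨k, ⟨hk0, hkg⟩, rfl⟩
    rw [hpq, hcross, hqr, hrp]
    exact ⟨mul_zero g, mul_pos (sub_pos.2 hkg) h, mul_nonneg hk0 h.le⟩

lemma encard_halfOpenEdge {p q r : ℤ × ℤ} (h : 0 < orient p q r) :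
    {z | orient p q z = 0 ∧ 0 < orient q r z ∧ 0 ≤ orient r p z}.encard =
      Int.gcd (q.1 - p.1) (q.2 - p.2) := by
  have hpos : 0 < Int.gcd (q.1 - p.1) (q.2 - p.2) := gcd_pos_of_cross_ne_zero h.ne'
  obtain ⟨m, n, a, b, hab, hmn⟩ := exists_bezout_primitive (u := q - p) hpos
  rw [Prod.fst_sub, Prod.snd_sub] at hmn
  generalize Int.gcd (q.1 - p.1) (q.2 - p.2) = g at hmn hpos ⊢
  obtain rfl : q = p + (g : ℤ) • (m, n) := by rw [← hmn, add_sub_cancel]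
  have hg : (0 : ℤ) < g := by exact_mod_cast hpos
  have hcross : 0 < cross (m, n) (r - p) := by
    rw [← mul_pos_iff_of_pos_left hg]
    simpa [orient, cross, mul_sub, mul_assoc] using h
  have hinj : Function.Injective fun k : ℤ => p + k • (m, n) := by
    refine (add_right_injective p).comp (smul_left_injective ℤ fun hzero => ?_)
    rw [Prod.mk_eq_zero] at hzero
    simp [hzero] at hab
  have hedge : {z | orient p (p + (g : ℤ) • (m, n)) z = 0 ∧
      0 < orient (p + (g : ℤ) • (m, n)) r z ∧ 0 ≤ orient r p z} =
        (fun k : ℤ => p + k • (m, n)) '' Finset.Ico 0 (g : ℤ) := by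
    ext z
    rw [Finset.coe_Ico]
    exact mem_halfOpenEdge_iff hab hg hcross z
  rw [hedge, hinj.encard_image, Set.encard_coe_eq_coe_finsetCard, Int.card_Ico, sub_zero,
    Int.toNat_natCast]

theorem bcount_latticeTriangle {p q r : ℤ × ℤ} (h : 0 < orient p q r) :
    bcount (latticeTriangle p q r) = Int.gcd (q.1 - p.1) (q.2 - p.2) +
      Int.gcd (r.1 - q.1) (r.2 - q.2) + Int.gcd (p.1 - r.1) (p.2 - r.2) := by
  have hpq := encard_halfOpenEdge h
  have hqr := encard_halfOpenEdge ((orient_rotate p q r).symm ▸ h)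
  have hrp := encard_halfOpenEdge ((orient_rotate r p q) ▸ h)
  have hfrontier : {z | toR2 z ∈ frontier (latticeTriangle p q r)} =
      {z | orient p q z = 0 ∧ 0 < orient q r z ∧ 0 ≤ orient r p z} ∪
      {z | orient q r z = 0 ∧ 0 < orient r p z ∧ 0 ≤ orient p q z} ∪
      {z | orient r p z = 0 ∧ 0 < orient p q z ∧ 0 ≤ orient q r z} := by
    ext z
    have hsum := orient_add_orient_add_orient p q r z
    simp only [Set.mem_union, Set.mem_ofPred_eq, toR2_mem_frontier_latticeTriangle h]
    omega
  rw [bcount, Set.ncard, hfrontier, Set.encard_union_eq, Set.encard_union_eq, hpq, hqr, hrp]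
  · exact_mod_cast ENat.toNat_natCast _
  · rw [Set.disjoint_left]
    intro z
    simp only [Set.mem_ofPred_eq]
    omega
  · rw [Set.disjoint_left]
    intro z
    simp only [Set.mem_union, Set.mem_ofPred_eq]
    omega

lemma bcount_latticeTriangle_hermite {A C : ℤ} (B : ℤ) (hA : 0 < A) (hC : 0 < C) :
    (bcount (latticeTriangle (0, 0) (A, 0) (B, C)) : ℤ) =
      A + Int.gcd B C + Int.gcd (B - A) C := by
  rw [bcount_latticeTriangle (by rw [orient_hermite]; positivity)]
  simp only [sub_zero, zero_sub, Int.gcd_zero_right, Int.gcd_neg, Int.neg_gcd]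
  push_cast
  rw [abs_of_pos hA]
  ring

/-- Number-theoretic criterion for `(b, i)` to be realized by a lattice triangle:
`(b, i) ∈ 𝒯` iff there are integers `A, B, C` with `A > 0`, `0 ≤ B < C`,
`b = A + gcd(B, C) + gcd(B − A, C)` and `i = (A·C − b)/2 + 1`. -/
theorem lattice_triangle_bi_criterion (b i : ℕ) :
    (∃ T : Set (ℝ × ℝ), IsLatticeTriangle T ∧ bcount T = b ∧ icount T = i) ↔
      ∃ A B C : ℤ, 0 < A ∧ 0 ≤ B ∧ B < C ∧
        (b : ℤ) = A + (Int.gcd B C : ℤ) + (Int.gcd (B - A) C : ℤ) ∧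
        (i : ℤ) = (A * C - (b : ℤ)) / 2 + 1 := by
  constructor
  · rintro ⟨T, hT, rfl, rfl⟩
    obtain ⟨p, q, r, h, rfl⟩ := hT.exists_orient_pos
    obtain ⟨e, he, A, B, C, hA, hB, hBC, hp, hq, hr⟩ := exists_preservesOrient_hermite h
    have hb := bcount_latticeTriangle_hermite B hA (hB.trans_lt hBC)
    have hpick := two_mul_icount_add_bcount h
    rw [← hp, ← hq, ← hr, bcount_latticeTriangle_apply he h] at hb
    rw [← he, hp, hq, hr, orient_hermite] at hpick
    exact ⟨A, B, C, hA, hB, hBC, hb, by omega⟩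
  · rintro ⟨A, B, C, hA, hB, hBC, hb, hi⟩
    have hC : 0 < C := hB.trans_lt hBC
    have h : 0 < orient (0, 0) (A, 0) (B, C) := by rw [orient_hermite]; positivity
    have hb' := bcount_latticeTriangle_hermite B hA hC
    have hpick := two_mul_icount_add_bcount h
    rw [orient_hermite] at hpick
    exact ⟨_, isLatticeTriangle_latticeTriangle h.ne', by omega, by omega⟩
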